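/- Let R, r, a > 0 with R > r + a (so the circle of radius r centered at (a,0) lies inside the circle of radius R centered at the origin). Set b = R² + r² − a², λ1 = 1, λ2 = (b + √(b² − 4r²R²))/(2R²), λ3 = (b − √(b² − 4r²R²))/(2R²), e = √((λ1−λ2)/(λ1−λ3)), and let ρ = F(arcsin √(1−λ3), e)/(2K(e)) be the rotation number of the corresponding Poncelet (bicentric polygon) map. Then: (1) ρ = 1/4 if and only if 1/(R−a)² + 1/(R+a)² = 1/r² (Fuss's condition for bicentric quadrilaterals); (2) ρ = 1/3 if and only if 1/(R−a) + 1/(R+a) = 1/r (the Chapple–Euler condition for bicentric triangles). -/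

import Mathlib

open Real

/-- Incomplete elliptic integral of the first kind `F(φ,e)`. -/
noncomputable def ellF (φ e : ℝ) : ℝ :=
  ∫ τ in (0:ℝ)..φ, 1 / Real.sqrt (1 - e ^ 2 * Real.sin τ ^ 2)

/-- Complete elliptic integral of the first kind `K(e)`. -/
noncomputable def ellK (e : ℝ) : ℝ := ellF (Real.pi / 2) e


lemma ell_arg_pos {e : ℝ} (he : e ^ 2 < 1) (x : ℝ) : 0 < 1 - e ^ 2 * Real.sin x ^ 2 := by
  nlinarith [Real.sin_sq_le_one x, sq_nonneg (Real.sin x), sq_nonneg e]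

lemma ellF_hasDerivAt {e : ℝ} (he : e ^ 2 < 1) (x : ℝ) :
    HasDerivAt (fun y => ellF y e) (1 / Real.sqrt (1 - e ^ 2 * Real.sin x ^ 2)) x := by
  have hc : Continuous fun τ : ℝ => 1 / Real.sqrt (1 - e ^ 2 * Real.sin τ ^ 2) := by
    refine Continuous.div continuous_const (by fun_prop) ?_
    intro y
    exact (Real.sqrt_pos.2 (ell_arg_pos he y)).ne'
  exact (hc.integral_hasStrictDerivAt 0 x).hasDerivAt

lemma ellF_strictMono {e : ℝ} (he : e ^ 2 < 1) : StrictMono (fun y => ellF y e) := by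
  refine strictMono_of_deriv_pos fun x => ?_
  rw [(ellF_hasDerivAt he x).deriv]
  have := Real.sqrt_pos.2 (ell_arg_pos he x)
  positivity

lemma ellF_zero (e : ℝ) : ellF 0 e = 0 := by simp [ellF]

lemma ellF_reflect {e : ℝ} (he : e ^ 2 < 1) (x : ℝ) :
    ellF (π - x) e + ellF x e = 2 * ellK e := by
  have hd : ∀ y, HasDerivAt (fun y => ellF (π - y) e + ellF y e) 0 y := by
    intro y
    have h1 : HasDerivAt (fun y : ℝ => π - y) (-1) y := by
      simpa using (hasDerivAt_id y).const_sub π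
    have h2 := ((ellF_hasDerivAt he (π - y)).comp y h1).add (ellF_hasDerivAt he y)
    refine h2.congr_deriv ?_
    rw [Real.sin_pi_sub]
    ring
  have := is_const_of_deriv_eq_zero (fun y => (hd y).differentiableAt)
    (fun y => (hd y).deriv) x (π / 2)
  rw [this, show π - π / 2 = π / 2 by ring]
  simp only [ellK]
  ring

lemma ell_dup_deriv {e : ℝ} (he : e ^ 2 < 1) {x : ℝ} (hx : 0 < Real.cos x) :
    HasDerivAt (fun y => ellF (2 * Real.arctan
      (Real.tan y * Real.sqrt (1 - e ^ 2 * Real.sin y ^ 2))) e - 2 * ellF y e) 0 x := by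
  have hpos := ell_arg_pos he x
  have hT : HasDerivAt (fun y => Real.tan y * Real.sqrt (1 - e ^ 2 * Real.sin y ^ 2)) _ x :=
    (Real.hasDerivAt_tan hx.ne').mul
      (((((Real.hasDerivAt_sin x).pow 2).const_mul (e ^ 2)).const_sub 1).sqrt hpos.ne')
  have h2 := hT.arctan.const_mul 2
  have h3 := ((ellF_hasDerivAt he _).comp x h2).sub ((ellF_hasDerivAt he x).const_mul 2)
  refine h3.congr_deriv ?_
  simp only [Real.sin_two_mul, Real.tan_eq_sin_div_cos, Pi.pow_apply]
  have hd2 : Real.sqrt (1 - e ^ 2 * Real.sin x ^ 2) ^ 2 = 1 - e ^ 2 * Real.sin x ^ 2 :=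
    Real.sq_sqrt hpos.le
  have hd : 0 < Real.sqrt (1 - e ^ 2 * Real.sin x ^ 2) := Real.sqrt_pos.2 hpos
  have hsc := Real.sin_sq_add_cos_sq x
  set d := Real.sqrt (1 - e ^ 2 * Real.sin x ^ 2) with hdd
  generalize Real.sin x = s at *
  generalize Real.cos x = c at *
  have hc2 : c ^ 2 = 1 - s ^ 2 := by linarith
  have hD : 0 < c ^ 2 + s ^ 2 * d ^ 2 := by positivity
  have hN : 0 < d ^ 2 - e ^ 2 * s ^ 2 * c ^ 2 := by
    rw [hd2, hc2]
    nlinarith [mul_nonneg (sq_nonneg e) (sq_nonneg (1 - s ^ 2))]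
  have hsin : Real.sin (Real.arctan (s / c * d)) * Real.cos (Real.arctan (s / c * d))
      = s * c * d / (c ^ 2 + s ^ 2 * d ^ 2) := by
    have : Real.sin (Real.arctan (s / c * d)) * Real.cos (Real.arctan (s / c * d))
      = (s / c * d) * Real.cos (Real.arctan (s / c * d)) ^ 2 := by
      have h := Real.tan_mul_cos (Real.cos_arctan_pos (s / c * d)).ne'
      rw [Real.tan_arctan] at h
      rw [← h]; ring
    rw [this, Real.cos_sq_arctan]
    field_simp
  have hΔ : Real.sqrt (1 - e ^ 2 * (2 * Real.sin (Real.arctan (s / c * d))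
      * Real.cos (Real.arctan (s / c * d))) ^ 2)
      = (d ^ 2 - e ^ 2 * s ^ 2 * c ^ 2) / (c ^ 2 + s ^ 2 * d ^ 2) := by
    rw [mul_assoc 2, hsin, ← Real.sqrt_sq (div_pos hN hD).le]
    congr 1
    field_simp
    rw [hd2, hc2]
    ring
  rw [hΔ]
  have hTd : 1 / (1 + (s / c * d) ^ 2) = c ^ 2 / (c ^ 2 + s ^ 2 * d ^ 2) := by
    field_simp
  rw [hTd]
  field_simp
  norm_num
  ring

lemma ell_dup {e : ℝ} (he : e ^ 2 < 1) {x : ℝ} (h0 : 0 ≤ x) (hx : x < π / 2) :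
    ellF (2 * Real.arctan (Real.tan x * Real.sqrt (1 - e ^ 2 * Real.sin x ^ 2))) e
      = 2 * ellF x e := by
  have hd : ∀ y ∈ Set.Ioo (-(π / 2)) (π / 2), HasDerivAt (fun y => ellF (2 * Real.arctan
      (Real.tan y * Real.sqrt (1 - e ^ 2 * Real.sin y ^ 2))) e - 2 * ellF y e) 0 y :=
    fun y hy => ell_dup_deriv he (Real.cos_pos_of_mem_Ioo hy)
  have := isOpen_Ioo.is_const_of_deriv_eq_zero isPreconnected_Ioo
    (fun y hy => (hd y hy).differentiableAt.differentiableWithinAt)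
    (fun y hy => (hd y hy).deriv) (x := x) (y := 0)
    ⟨by linarith [Real.pi_pos], hx⟩ ⟨by linarith [Real.pi_pos], by linarith [Real.pi_pos]⟩
  simp [ellF_zero] at this
  linarith

lemma ellK_pos {e : ℝ} (he : e ^ 2 < 1) : 0 < ellK e := by
  have := ellF_strictMono he (show (0 : ℝ) < π / 2 by positivity)
  simpa [ellF_zero, ellK] using this

lemma quarter_iff {e : ℝ} (he : e ^ 2 < 1) {x : ℝ} (h0 : 0 < x) (hx : x < π / 2) :
    ellF x e / (2 * ellK e) = 1 / 4 ↔
      Real.sin x * Real.sqrt (1 - e ^ 2 * Real.sin x ^ 2) = Real.cos x := by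
  have hK := ellK_pos he
  have hc : 0 < Real.cos x := Real.cos_pos_of_mem_Ioo ⟨by linarith, hx⟩
  have h1 : ellF x e / (2 * ellK e) = 1 / 4 ↔ 2 * ellF x e = ellF (π / 2) e := by
    rw [div_eq_div_iff (by positivity) (by norm_num)]
    change _ ↔ _ = ellK e
    constructor <;> intro h <;> linarith
  rw [h1, ← ell_dup he h0.le hx, (ellF_strictMono he).injective.eq_iff]
  have h2 : ∀ t : ℝ, 2 * Real.arctan t = π / 2 ↔ t = 1 := by
    intro t
    rw [← Real.arctan_injective.eq_iff (a := t), Real.arctan_one]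
    constructor <;> intro h <;> linarith
  rw [h2, Real.tan_eq_sin_div_cos, div_mul_eq_mul_div, div_eq_one_iff_eq hc.ne']

lemma third_iff {e : ℝ} (he : e ^ 2 < 1) {x : ℝ} (h0 : 0 < x) (hx : x < π / 2) :
    ellF x e / (2 * ellK e) = 1 / 3 ↔
      (1 - Real.cos x) * Real.sqrt (1 - e ^ 2 * Real.sin x ^ 2) = Real.cos x := by
  have hK := ellK_pos he
  have hc : 0 < Real.cos x := Real.cos_pos_of_mem_Ioo ⟨by linarith, hx⟩
  have h1 : ellF x e / (2 * ellK e) = 1 / 3 ↔ 2 * ellF x e = ellF (π - x) e := by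
    rw [div_eq_div_iff (by positivity) (by norm_num)]
    have := ellF_reflect he x
    constructor <;> intro h <;> linarith
  rw [h1, ← ell_dup he h0.le hx, (ellF_strictMono he).injective.eq_iff]
  have hs2 : 0 < Real.sin (x / 2) := Real.sin_pos_of_pos_of_lt_pi (by linarith) (by linarith)
  have hc2 : 0 < Real.cos (x / 2) := Real.cos_pos_of_mem_Ioo ⟨by linarith, by linarith⟩
  have h2 : ∀ t : ℝ, 2 * Real.arctan t = π - x ↔ t = Real.cos (x / 2) / Real.sin (x / 2) := by
    intro t
    have : Real.arctan (Real.cos (x / 2) / Real.sin (x / 2)) = π / 2 - x / 2 := by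
      rw [← Real.arctan_tan (x := π / 2 - x / 2) (by linarith) (by linarith),
        Real.tan_eq_sin_div_cos, Real.sin_pi_div_two_sub, Real.cos_pi_div_two_sub]
    rw [← Real.arctan_injective.eq_iff (a := t), this]
    constructor <;> intro h <;> linarith
  rw [h2, Real.tan_eq_sin_div_cos]
  generalize Real.sqrt (1 - e ^ 2 * Real.sin x ^ 2) = d
  have e1 : Real.sin x = 2 * Real.sin (x / 2) * Real.cos (x / 2) := by
    rw [← Real.sin_two_mul]; congr 1; ring
  have e2 : 1 - Real.cos x = 2 * Real.sin (x / 2) ^ 2 := by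
    have := Real.cos_two_mul' (x / 2)
    rw [show 2 * (x / 2) = x by ring] at this
    nlinarith [Real.sin_sq_add_cos_sq (x / 2)]
  rw [e2, e1, div_mul_eq_mul_div, div_eq_div_iff hc.ne' hs2.ne']
  constructor
  · intro h
    apply mul_left_cancel₀ hc2.ne'
    linarith
  · intro h
    rw [← h]; ring

/-- Fuss's condition (bicentric quadrilaterals, rotation number 1/4)
and the Chapple–Euler condition (bicentric triangles, rotation number 1/3) for a
circle of radius `r` centered at `(a,0)` inside a circle of radius `R` centered at
the origin. -/
theorem fuss_and_chapple_euler (R r a : ℝ)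
    (hR : 0 < R) (hr : 0 < r) (ha : 0 < a) (hin : r + a < R) :
    let b := R ^ 2 + r ^ 2 - a ^ 2
    let l2 := (b + Real.sqrt (b ^ 2 - 4 * r ^ 2 * R ^ 2)) / (2 * R ^ 2)
    let l3 := (b - Real.sqrt (b ^ 2 - 4 * r ^ 2 * R ^ 2)) / (2 * R ^ 2)
    let e := Real.sqrt ((1 - l2) / (1 - l3))
    let ρ := ellF (Real.arcsin (Real.sqrt (1 - l3))) e / (2 * ellK e)
    (ρ = 1 / 4 ↔ 1 / (R - a) ^ 2 + 1 / (R + a) ^ 2 = 1 / r ^ 2) ∧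
    (ρ = 1 / 3 ↔ 1 / (R - a) + 1 / (R + a) = 1 / r) := by
  intro b l2 l3 e ρ
  have hra : 0 < R - a := by linarith
  have hb : 2 * r * R < b := by
    have : r ^ 2 - 2 * r * R + R ^ 2 - a ^ 2 = (R - r - a) * (R - r + a) := by ring
    have h2 : 0 < (R - r - a) * (R - r + a) := mul_pos (by linarith) (by linarith)
    simp only [b]; linarith
  have hrR : 0 < r * R := by positivity
  have hdisc : 0 < b ^ 2 - 4 * r ^ 2 * R ^ 2 := by nlinarith
  have hS := Real.sqrt_pos.2 hdisc
  have hS2 := Real.sq_sqrt hdisc.le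
  have hsum : l2 + l3 = b / R ^ 2 := by simp only [l2, l3]; field_simp; ring
  have hprod : l2 * l3 = r ^ 2 / R ^ 2 := by
    simp only [l2, l3]; field_simp; linear_combination -hS2
  have hdiff : l2 - l3 = Real.sqrt (b ^ 2 - 4 * r ^ 2 * R ^ 2) / R ^ 2 := by
    simp only [l2, l3]; field_simp; ring
  have hlt : l3 < l2 := by
    have : 0 < l2 - l3 := by rw [hdiff]; positivity
    linarith
  have hl2 : 0 < l2 := by
    have : 0 < b := by linarith
    simp only [l2]; positivity
  have hl3 : 0 < l3 := by
    have : 0 < l2 * l3 := by rw [hprod]; positivity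
    exact (mul_pos_iff_of_pos_left hl2).1 this
  have h1prod : (1 - l2) * (1 - l3) = a ^ 2 / R ^ 2 := by
    have : (1 - l2) * (1 - l3) = 1 - (l2 + l3) + l2 * l3 := by ring
    rw [this, hsum, hprod]; simp only [b]; field_simp; ring
  have h1p : 0 < (1 - l2) * (1 - l3) := by rw [h1prod]; positivity
  have hp1 : l2 * l3 < 1 := by
    rw [hprod, div_lt_one (by positivity)]
    nlinarith
  have h3 : l3 < 1 := by nlinarith
  have h3' : 0 < 1 - l3 := by linarith
  have h2 : 0 < 1 - l2 := (mul_pos_iff_of_pos_right h3').1 h1p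
  have hesq : e ^ 2 = (1 - l2) / (1 - l3) := Real.sq_sqrt (by positivity)
  have he : e ^ 2 < 1 := by rw [hesq, div_lt_one h3']; linarith
  have hs0 : 0 < Real.sqrt (1 - l3) := Real.sqrt_pos.2 h3'
  have hs1 : Real.sqrt (1 - l3) < 1 := by
    rw [Real.sqrt_lt' one_pos]; linarith
  have hx0 : 0 < Real.arcsin (Real.sqrt (1 - l3)) := Real.arcsin_pos.2 hs0
  have hx1 : Real.arcsin (Real.sqrt (1 - l3)) < π / 2 := Real.arcsin_lt_pi_div_two.2 hs1
  have hsin : Real.sin (Real.arcsin (Real.sqrt (1 - l3))) = Real.sqrt (1 - l3) :=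
    Real.sin_arcsin (by linarith) hs1.le
  have hcos : Real.cos (Real.arcsin (Real.sqrt (1 - l3))) = Real.sqrt l3 := by
    rw [Real.cos_arcsin, Real.sq_sqrt h3'.le]; congr 1; ring
  have hdn : 1 - e ^ 2 * Real.sqrt (1 - l3) ^ 2 = l2 := by
    rw [Real.sq_sqrt h3'.le, hesq]; field_simp; ring
  have hq := quarter_iff he hx0 hx1
  have ht := third_iff he hx0 hx1
  rw [hsin, hcos, hdn] at hq
  rw [hsin, hcos, hdn] at ht
  refine ⟨hq.trans ?_, ht.trans ?_⟩
  · have k1 : Real.sqrt (1 - l3) * Real.sqrt l2 = Real.sqrt l3 ↔ l2 - l3 = l2 * l3 := by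
      rw [← Real.sqrt_mul h3'.le, Real.sqrt_inj (by positivity) hl3.le]
      constructor <;> intro h <;> linarith
    rw [k1, hdiff, hprod, div_left_inj' (by positivity),
      Real.sqrt_eq_iff_eq_sq hdisc.le (by positivity)]
    have hra2 : 0 < R + a := by linarith
    rw [div_add_div _ _ (by positivity) (by positivity),
      div_eq_div_iff (by positivity) (by positivity)]
    simp only [b]
    constructor <;> intro h <;> linarith
  · have hc := Real.sqrt_pos.2 hl3
    have hd := Real.sqrt_lt_sqrt hl3.le hlt
    have hc2 := Real.sq_sqrt hl3.le
    have hd2 := Real.sq_sqrt hl2.le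
    have hcd : Real.sqrt l2 * Real.sqrt l3 = r / R := by
      rw [← Real.sqrt_mul hl2.le, hprod, ← div_pow, Real.sqrt_sq (by positivity)]
    have k1 : (1 - Real.sqrt l3) * Real.sqrt l2 = Real.sqrt l3 ↔
        Real.sqrt l2 - Real.sqrt l3 = r / R := by
      rw [← hcd]
      constructor <;> intro h <;> linarith
    have k2 : (Real.sqrt l2 - Real.sqrt l3) ^ 2 = b / R ^ 2 - 2 * (r / R) := by
      rw [← hsum, ← hcd]; linear_combination hc2 + hd2
    have hra2 : 0 < R + a := by linarith
    rw [k1, ← sq_eq_sq₀ (by linarith) (by positivity), k2,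
      div_add_div _ _ hra.ne' hra2.ne', div_eq_div_iff (by positivity) hr.ne']
    simp only [b]
    field_simp
    constructor <;> intro h <;> linarith
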